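/- arXiv:2307.03059 — 4 statements merged into one kernel-verified Lean document; each statement's English description precedes it below -/
import Mathlib

section
/- (Correctness of the designator) For any structure-context T{*} with one hole and any structure Ξ, the structure (desi(T{*}), Ξ) is structurally equivalent to T{Ξ}, i.e. (desi(T{*}), Ξ) ∼ T{Ξ}. -/
set_option autoImplicit false

namespace NACLL

/-- Structures: binary trees whose leaves are formulas, with an empty structure.
`(∅,Γ)` and `(Γ,∅)` are identified with `Γ` via the smart constructor `comma`. -/
inductive Struct (F : Type) : Type where
  | emp : Struct F
  | leaf : F → Struct F
  | pair : Struct F → Struct F → Struct F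

namespace Struct

/-- Pairing of structures, erasing empty substructures. -/
def comma {F : Type} : Struct F → Struct F → Struct F
  | .emp, Δ => Δ
  | Γ, .emp => Γ
  | Γ, Δ => .pair Γ Δ

def map {F G : Type} (f : F → G) : Struct F → Struct G
  | .emp => .emp
  | .leaf a => .leaf (f a)
  | .pair l r => .pair (map f l) (map f r)

/-- Number of formula leaves of a structure. -/
def nleaves {F : Type} : Struct F → ℕ
  | .emp => 0
  | .leaf _ => 1
  | .pair l r => nleaves l + nleaves r

/-- All formula leaves of a structure satisfy a predicate. -/
def Forall {F : Type} (p : F → Prop) : Struct F → Prop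
  | .emp => True
  | .leaf a => p a
  | .pair l r => Forall p l ∧ Forall p r

end Struct

/-- Structural equivalence: the reflexive, symmetric, transitive closure of
top-level exchange and top-level associativity. -/
inductive StEquiv {F : Type} : Struct F → Struct F → Prop where
  | refl (Γ : Struct F) : StEquiv Γ Γ
  | symm {Γ Δ : Struct F} : StEquiv Γ Δ → StEquiv Δ Γ
  | trans {Γ Δ Θ : Struct F} : StEquiv Γ Δ → StEquiv Δ Θ → StEquiv Γ Θ
  | exch (Γ Δ : Struct F) : StEquiv (Γ.comma Δ) (Δ.comma Γ)
  | assoc (Γ Δ Θ : Struct F) : StEquiv (Γ.comma (Δ.comma Θ)) ((Γ.comma Δ).comma Θ)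

/-- Contexts with one hole. -/
inductive Ctx (F : Type) : Type where
  | hole : Ctx F
  | pairL : Ctx F → Struct F → Ctx F
  | pairR : Struct F → Ctx F → Ctx F

namespace Ctx

/-- Filling the hole of a context with a structure (empty substructures are erased). -/
def fill {F : Type} : Ctx F → Struct F → Struct F
  | .hole, Ξ => Ξ
  | .pairL R Δ, Ξ => (fill R Ξ).comma Δ
  | .pairR Γ R, Ξ => Γ.comma (fill R Ξ)

/-- A context viewed as a structure over `Option F`, the hole being the leaf `none`. -/
def toStruct {F : Type} : Ctx F → Struct (Option F)
  | .hole => .leaf none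
  | .pairL R Δ => (toStruct R).comma (Δ.map some)
  | .pairR Γ R => (Γ.map some).comma (toStruct R)

def size {F : Type} : Ctx F → ℕ
  | .hole => 0
  | .pairL R _ => size R + 2
  | .pairR _ R => size R + 1

/-- The designator. -/
def desi {F : Type} : Ctx F → Struct F
  | .hole => .emp
  | .pairL R Δ => desi (.pairR Δ R)
  | .pairR Γ .hole => Γ
  | .pairR Γ (.pairR Δ P) => desi (.pairR (Γ.comma Δ) P)
  | .pairR Γ (.pairL D Θp) => desi (.pairR (Θp.comma Γ) D)
termination_by c => size c
decreasing_by all_goals simp [size]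

/-- All formula leaves of a context (other than the hole) satisfy a predicate. -/
def Forall {F : Type} (p : F → Prop) : Ctx F → Prop
  | .hole => True
  | .pairL R Δ => Forall p R ∧ Δ.Forall p
  | .pairR Γ R => Γ.Forall p ∧ Forall p R

end Ctx

/-- Structural equivalence of one-hole contexts, treating the hole as a leaf. -/
def CtxEquiv {F : Type} (T X : Ctx F) : Prop := StEquiv T.toStruct X.toStruct

/-- Contexts with two holes (the first hole is the designated one). -/
inductive Ctx2 (F : Type) : Type where
  | splitLR : Ctx F → Ctx F → Ctx2 F
  | splitRL : Ctx F → Ctx F → Ctx2 F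
  | pairL : Ctx2 F → Struct F → Ctx2 F
  | pairR : Struct F → Ctx2 F → Ctx2 F

namespace Ctx2

/-- Filling the first hole of a two-hole context, yielding a one-hole context. -/
def fillFst {F : Type} : Ctx2 F → Struct F → Ctx F
  | .splitLR c1 c2, Δ => .pairR (c1.fill Δ) c2
  | .splitRL c2 c1, Δ => .pairL c2 (c1.fill Δ)
  | .pairL R Γ, Δ => .pairL (fillFst R Δ) Γ
  | .pairR Γ R, Δ => .pairR Γ (fillFst R Δ)

end Ctx2

end NACLL

/-!
Each recursive clause of the designator replaces the context by one whose filling with `Ξ` is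
equivalent: by an exchange, a reassociation, or the cyclic rotation
`((Δ, Γ), R{Ξ}) ∼ (Γ, (R{Ξ}, Δ))`. At the terminal contexts `*` and `(Γ, *)` the two sides of the
claim coincide. The generators of `∼` act only at the root, so one cannot rewrite inside `T{Ξ}`;
this is no obstacle, because the recursion keeps the component containing the hole next to the root.
-/

namespace NACLL

theorem StEquiv.comma_rotate {F : Type} (Γ Δ Θ : Struct F) :
    StEquiv ((Γ.comma Δ).comma Θ) (Δ.comma (Θ.comma Γ)) :=
  ((exch (Γ.comma Δ) Θ).trans (assoc Θ Γ Δ)).trans (exch (Θ.comma Γ) Δ)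

namespace Ctx

variable {F : Type}

theorem fill_pairR_stEquiv_fill_pairL (R : Ctx F) (Δ Ξ : Struct F) :
    StEquiv ((pairR Δ R).fill Ξ) ((pairL R Δ).fill Ξ) :=
  .exch Δ (R.fill Ξ)

theorem fill_pairR_comma_stEquiv_fill_pairR_pairR (Γ Δ : Struct F) (R : Ctx F) (Ξ : Struct F) :
    StEquiv ((pairR (Γ.comma Δ) R).fill Ξ) ((pairR Γ (pairR Δ R)).fill Ξ) :=
  (StEquiv.assoc Γ Δ (R.fill Ξ)).symm

theorem fill_pairR_comma_stEquiv_fill_pairR_pairL (Γ Δ : Struct F) (R : Ctx F) (Ξ : Struct F) :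
    StEquiv ((pairR (Δ.comma Γ) R).fill Ξ) ((pairR Γ (pairL R Δ)).fill Ξ) :=
  .comma_rotate Δ Γ (R.fill Ξ)

end Ctx

/-- **Correctness of the designator.**  For any one-hole context `T{*}` and any
structure `Ξ`, the structure `(desi T{*}, Ξ)` is structurally equivalent to `T{Ξ}`. -/
theorem designator_correct {F : Type} (T : Ctx F) (Ξ : Struct F) :
    StEquiv (T.desi.comma Ξ) (T.fill Ξ) := by
  fun_induction Ctx.desi T with
  | case1 => exact .refl Ξ
  | case2 R Δ ih => exact ih.trans (Ctx.fill_pairR_stEquiv_fill_pairL R Δ Ξ)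
  | case3 Γ => exact .refl (Γ.comma Ξ)
  | case4 Γ Δ P ih => exact ih.trans (Ctx.fill_pairR_comma_stEquiv_fill_pairR_pairR Γ Δ P Ξ)
  | case5 Γ D Θ ih => exact ih.trans (Ctx.fill_pairR_comma_stEquiv_fill_pairR_pairL Γ Θ D Ξ)

end NACLL
end

section
/- (Designator invariance) If two one-hole contexts are structurally equivalent as trees with a distinguished hole, T{*} ∼ X{*}, then their designators are syntactically equal: desi(T{*}) ≡ desi(X{*}). -/
/-!
A structure is a planar binary tree. Forgetting its root leaves an unrooted tree whose ternary nodes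
are cyclically oriented; exchange and associativity at top level only move the root along it. The
designator of a context is this tree rerooted at the hole, so it does not see where the root was.

To avoid singling out a hole before rerooting, we reroot at all occurrences of a leaf at once.
-/

set_option autoImplicit false

namespace NACLL

variable {F G : Type}

namespace Struct

@[simp]
theorem emp_comma (Γ : Struct F) : emp.comma Γ = Γ := by
  cases Γ <;> rfl

@[simp]
theorem comma_emp (Γ : Struct F) : Γ.comma emp = Γ := by
  cases Γ <;> rfl

theorem map_comma (f : F → G) (Γ Δ : Struct F) :
    (Γ.comma Δ).map f = (Γ.map f).comma (Δ.map f) := by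
  cases Γ <;> cases Δ <;> rfl

theorem map_injective {f : F → G} (hf : Function.Injective f) :
    Function.Injective (Struct.map f) := by
  intro Γ
  induction Γ with
  | emp => rintro (_ | _ | _) h <;> simp_all [Struct.map]
  | leaf a => rintro (_ | _ | _) h <;> simp_all [Struct.map, hf.eq_iff]
  | pair l r ihl ihr =>
    rintro (_ | _ | ⟨l', r'⟩) h <;> simp only [Struct.map, pair.injEq, reduceCtorEq] at h
    rw [ihl h.1, ihr h.2]

/-- The designators of the contexts `(Γ, S{*})` in which the hole is an occurrence of the leaf `a`
in `S`. This is a set because `a` may occur any number of times; the structure `Γ` accumulates the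
part of the tree that has been left behind on the way from the root to the hole. -/
def designators (a : F) : Struct F → Struct F → Set (Struct F)
  | _, emp => ∅
  | Γ, leaf b => {Δ | b = a ∧ Δ = Γ}
  | Γ, pair l r => designators a (r.comma Γ) l ∪ designators a (Γ.comma l) r

theorem designators_comma (a : F) (Γ l r : Struct F) :
    designators a Γ (l.comma r) =
      designators a (r.comma Γ) l ∪ designators a (Γ.comma l) r := by
  cases l <;> cases r <;> first | rfl | simp [designators]

theorem designators_map_of_notMem_range {f : F → G} {a : G} (ha : a ∉ Set.range f)
    (Γ : Struct G) (S : Struct F) : designators a Γ (S.map f) = ∅ := by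
  induction S generalizing Γ with
  | emp => rfl
  | leaf b =>
    have hb : f b ≠ a := fun h => ha ⟨b, h⟩
    simp [Struct.map, designators, hb]
  | pair l r ihl ihr => simp only [Struct.map, designators, ihl, ihr, Set.union_empty]

end Struct

open Struct

theorem StEquiv.designators_eq (a : F) {S T : Struct F} (h : StEquiv S T) :
    designators a .emp S = designators a .emp T := by
  induction h with
  | refl => rfl
  | symm _ ih => exact ih.symm
  | trans _ _ ih₁ ih₂ => exact ih₁.trans ih₂
  | exch Γ Δ => simp only [designators_comma, emp_comma, comma_emp, Set.union_comm]
  | assoc Γ Δ Θ => simp only [designators_comma, emp_comma, comma_emp, Set.union_assoc]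

namespace Ctx

theorem desi_pairR_emp (T : Ctx F) : (pairR .emp T).desi = T.desi := by
  cases T with
  | hole => simp only [desi]
  | pairL R Δ => rw [desi, desi, comma_emp]
  | pairR Δ R => rw [desi, emp_comma]

theorem designators_toStruct (Γ : Struct F) (T : Ctx F) :
    designators none (Γ.map some) T.toStruct = {(pairR Γ T).desi.map some} := by
  have no_hole (Γ' : Struct (Option F)) (Δ : Struct F) :
      designators none Γ' (Δ.map some) = ∅ :=
    designators_map_of_notMem_range (by simp) Γ' Δ
  induction T generalizing Γ with
  | hole => simp [toStruct, designators, desi]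
  | pairL R Δ ih =>
    rw [toStruct, designators_comma, no_hole, Set.union_empty, ← map_comma, ih, desi]
  | pairR Δ R ih =>
    rw [toStruct, designators_comma, no_hole, Set.empty_union, ← map_comma, ih, desi]

end Ctx

/-- **Designator invariance.**  If two one-hole contexts are structurally
equivalent as trees with a distinguished hole, then their designators are
syntactically equal. -/
theorem designator_invariant {F : Type} (T X : Ctx F) (h : CtxEquiv T X) :
    T.desi = X.desi := by
  have designators_toStruct_emp (C : Ctx F) :
      designators none .emp C.toStruct = {C.desi.map some} := by
    simpa only [Struct.map, Ctx.desi_pairR_emp] using C.designators_toStruct .emp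
  have singleton_eq : {T.desi.map some} = ({X.desi.map some} : Set (Struct (Option F))) := by
    rw [← designators_toStruct_emp, ← designators_toStruct_emp, h.designators_eq]
  exact map_injective (Option.some_injective F) (Set.singleton_injective singleton_eq)

end NACLL
end

section
/- (Independent substructure preservation) If Δ is a substructure of the one-hole context R{Δ}{*} that does not contain the hole *, then Δ occurs as a substructure of the designator desi(R{Δ}{*}); moreover, replacing that occurrence of Δ by a structure Π inside desi(R{Δ}{*}) yields exactly desi(R{Π}{*}). -/
set_option autoImplicit false

namespace NACLL

/-! Each step in computing the designator moves the structures lying beside the path to the hole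
without inspecting them. The computation can therefore be run while one of these structures still
has a hole of its own, and so it commutes with filling that hole. -/

namespace Ctx2

/-- The designator of a two-hole context with respect to its second hole, as a context in the first
hole. The clauses are those of `Ctx.desi`, split according to the position of the first hole. -/
def desi {F : Type} : Ctx2 F → Ctx F
  | .splitLR K .hole => K
  | .splitLR K (.pairR Δ P) => desi (.splitLR (.pairL K Δ) P)
  | .splitLR K (.pairL D Θ) => desi (.splitLR (.pairR Θ K) D)
  | .splitRL D K => desi (.splitLR K D)
  | .pairL R Γ => desi (.pairR Γ R)
  | .pairR Γ (.splitLR K P) => desi (.splitLR (.pairR Γ K) P)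
  | .pairR Γ (.splitRL D K) => desi (.splitLR (.pairL K Γ) D)
  | .pairR Γ (.pairR Δ R) => desi (.pairR (Γ.comma Δ) R)
  | .pairR Γ (.pairL R Θ) => desi (.pairR (Θ.comma Γ) R)
termination_by R => (R.fillFst .emp).size
decreasing_by all_goals simp [fillFst, Ctx.size]

theorem desi_fillFst {F : Type} (R : Ctx2 F) (Δ : Struct F) :
    (R.fillFst Δ).desi = R.desi.fill Δ := by
  fun_induction Ctx2.desi R with
  | case1 => simp only [fillFst, Ctx.desi]
  | case2 _ _ _ ih | case3 _ _ _ ih | case4 _ _ ih | case5 _ _ ih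
  | case6 _ _ _ ih | case7 _ _ _ ih | case8 _ _ _ ih | case9 _ _ _ ih =>
    rw [← ih]
    simp only [fillFst, Ctx.desi, Ctx.fill]

end Ctx2

/-- **Independent substructure preservation.**  If `Δ` is a substructure of the
one-hole context `R{Δ}{*}` not containing the hole, then `Δ` occurs as a
substructure of the designator `desi (R{Δ}{*})`, and replacing that occurrence
of `Δ` by `Π` inside `desi (R{Δ}{*})` yields exactly `desi (R{Π}{*})`:
there is a one-hole context `S` with `desi (R{Δ}{*}) = S{Δ}` and
`desi (R{Π}{*}) = S{Π}`. -/
theorem independent_substructure_preservation {F : Type} (R : Ctx2 F) (Δ Θp : Struct F) :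
    ∃ S : Ctx F, (R.fillFst Δ).desi = S.fill Δ ∧ (R.fillFst Θp).desi = S.fill Θp :=
  ⟨R.desi, R.desi_fillFst Δ, R.desi_fillFst Θp⟩

end NACLL
end

section
/- The sequent ⊢ (B⊥⊗A, A⊥⅋B) (the translation of the acLL sequent A→B ⊢ A→B) is provable in the classical system CNL, and every proof of it uses the top-level exchange rule E. -/
set_option autoImplicit false

namespace CNL

/-- Formulas of classical non-associative non-commutative linear logic. -/
inductive Form : Type where
  | pos : ℕ → Form
  | neg : ℕ → Form
  | tensor : Form → Form → Form
  | par : Form → Form → Form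
  | one : Form
  | bot : Form
  | oplus : Form → Form → Form
  | with' : Form → Form → Form
  | zero : Form
  | top : Form

/-- Structures: binary trees of formulas, with an empty structure;
`(∅,Γ)` and `(Γ,∅)` are identified with `Γ` via the smart constructor `comma`. -/
inductive Struct : Type where
  | emp : Struct
  | leaf : Form → Struct
  | pair : Struct → Struct → Struct

/-- Pairing of structures, erasing empty substructures. -/
def Struct.comma : Struct → Struct → Struct
  | .emp, Δ => Δ
  | Γ, .emp => Γ
  | Γ, Δ => .pair Γ Δ

/-- Contexts with one hole. -/
inductive Ctx : Type where
  | hole : Ctx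
  | pairL : Ctx → Struct → Ctx
  | pairR : Struct → Ctx → Ctx

/-- Filling the hole of a context with a structure. -/
def Ctx.fill : Ctx → Struct → Struct
  | .hole, Ξ => Ξ
  | .pairL R Δ, Ξ => (fill R Ξ).comma Δ
  | .pairR Γ R, Ξ => Γ.comma (fill R Ξ)

/-- Derivability in CNL.  The first Boolean flag indicates whether the
top-level exchange rule `E` may be used, the second whether the top-level
associativity rules `A1` and `A2` may be used; `CNLDer true true` is full CNL. -/
inductive CNLDer : Bool → Bool → Struct → Prop where
  | initP {e a : Bool} (n : ℕ) :
      CNLDer e a (.pair (.leaf (.pos n)) (.leaf (.neg n)))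
  | initN {e a : Bool} (n : ℕ) :
      CNLDer e a (.pair (.leaf (.neg n)) (.leaf (.pos n)))
  | tensor {e a : Bool} {Γ Δ : Struct} {F G : Form} :
      CNLDer e a (Γ.comma (.leaf G)) → CNLDer e a (Δ.comma (.leaf F)) →
      CNLDer e a ((Γ.comma Δ).comma (.leaf (.tensor F G)))
  | par {e a : Bool} (R : Ctx) {F G : Form} :
      CNLDer e a (R.fill (.pair (.leaf F) (.leaf G))) →
      CNLDer e a (R.fill (.leaf (.par F G)))
  | oplus₁ {e a : Bool} (R : Ctx) {F1 F2 : Form} :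
      CNLDer e a (R.fill (.leaf F1)) → CNLDer e a (R.fill (.leaf (.oplus F1 F2)))
  | oplus₂ {e a : Bool} (R : Ctx) {F1 F2 : Form} :
      CNLDer e a (R.fill (.leaf F2)) → CNLDer e a (R.fill (.leaf (.oplus F1 F2)))
  | with' {e a : Bool} (R : Ctx) {F1 F2 : Form} :
      CNLDer e a (R.fill (.leaf F1)) → CNLDer e a (R.fill (.leaf F2)) →
      CNLDer e a (R.fill (.leaf (.with' F1 F2)))
  | bot {e a : Bool} (R : Ctx) :
      CNLDer e a (R.fill .emp) → CNLDer e a (R.fill (.leaf .bot))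
  | one {e a : Bool} : CNLDer e a (.leaf .one)
  | top {e a : Bool} (R : Ctx) : CNLDer e a (R.fill (.leaf .top))
  | exch {a : Bool} {Γ Δ : Struct} :
      CNLDer true a (Δ.comma Γ) → CNLDer true a (Γ.comma Δ)
  | assoc₁ {e : Bool} {Γ Δ Θ : Struct} :
      CNLDer e true (Γ.comma (Δ.comma Θ)) → CNLDer e true ((Γ.comma Δ).comma Θ)
  | assoc₂ {e : Bool} {Γ Δ Θ : Struct} :
      CNLDer e true ((Γ.comma Δ).comma Θ) → CNLDer e true (Γ.comma (Δ.comma Θ))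

end CNL

/-!
Reading a structure as the list of its leaves makes associativity invisible, and the `⊗` rule always
puts the new `⊗`-formula at the right end of that list. So a sequent consisting of a `⊗`-formula
followed by a nonempty list of formulas without `⊗`, `⊥` and `⊤` is never the conclusion of the `⊗`
rule; the `⅋`, `⊕` and `&` rules only lead back to premises of the same kind, and no axiom has this
shape. With exchange, the `⊗`-formula can instead be moved to the right end.
-/

namespace CNL

/-- The formulas occurring in a structure, from left to right. Structures that differ only in
bracketing have the same leaves. -/
def Struct.leaves : Struct → List Form
  | .emp => []
  | .leaf F => [F]
  | .pair Γ Δ => Γ.leaves ++ Δ.leaves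

theorem Struct.leaves_comma (Γ Δ : Struct) : (Γ.comma Δ).leaves = Γ.leaves ++ Δ.leaves := by
  cases Γ <;> cases Δ <;> simp [comma, leaves]

theorem Ctx.exists_leaves_fill (R : Ctx) :
    ∃ l r : List Form, ∀ Ξ : Struct, (R.fill Ξ).leaves = l ++ Ξ.leaves ++ r := by
  induction R with
  | hole => exact ⟨[], [], fun Ξ => by simp [fill]⟩
  | pairL R Δ ih =>
    obtain ⟨l, r, h⟩ := ih
    exact ⟨l, r ++ Δ.leaves, fun Ξ => by simp [fill, Struct.leaves_comma, h]⟩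
  | pairR Γ R ih =>
    obtain ⟨l, r, h⟩ := ih
    exact ⟨Γ.leaves ++ l, r, fun Ξ => by simp [fill, Struct.leaves_comma, h]⟩

/-- Formulas in which none of `⊗`, `⊥`, `⊤` occurs. The constants are excluded because `⊥` can be
erased from a sequent and `⊤` makes any sequent provable. -/
def Form.TensorBotTopFree : Form → Prop
  | .tensor _ _ | .bot | .top => False
  | .par F G | .oplus F G | .with' F G => F.TensorBotTopFree ∧ G.TensorBotTopFree
  | .pos _ | .neg _ | .one | .zero => True

/-- The obstruction to exchange-free provability: read from left to right, the structure is a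
`⊗`-formula followed by at least one formula, all of them free of `⊗`, `⊥` and `⊤`. -/
def Struct.TensorLed (Γ : Struct) : Prop :=
  ∃ F G, ∃ L ≠ [], Γ.leaves = .tensor F G :: L ∧ ∀ H ∈ L, H.TensorBotTopFree

namespace Struct.TensorLed

theorem not_comma_tensor (Γ : Struct) (F G : Form) :
    ¬ (Γ.comma (.leaf (.tensor F G))).TensorLed := by
  rintro ⟨F', G', L, hL, hleaves, hfree⟩
  have hlast : L.getLast hL = .tensor F G := by
    have h := congrArg List.getLast? hleaves
    simpa [leaves_comma, leaves, List.getLast?_cons, List.getLast?_eq_some_getLast hL] using h.symm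
  simpa only [hlast, Form.TensorBotTopFree] using hfree _ (List.getLast_mem hL)

theorem exists_leaves_fill {R : Ctx} {X : Form} (h : (R.fill (.leaf X)).TensorLed)
    (hX : ∀ F G, X ≠ .tensor F G) :
    ∃ F G l r, (∀ Ξ, (R.fill Ξ).leaves = .tensor F G :: (l ++ Ξ.leaves ++ r)) ∧
      ∀ H ∈ l ++ X :: r, H.TensorBotTopFree := by
  obtain ⟨F, G, L, -, hleaves, hfree⟩ := h
  obtain ⟨l, r, hfill⟩ := R.exists_leaves_fill
  rw [hfill, leaves, List.append_assoc, List.singleton_append] at hleaves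
  cases l with
  | nil => exact absurd (List.cons.inj hleaves).1 (hX F G)
  | cons Y l =>
    obtain ⟨rfl, rfl⟩ := List.cons.inj hleaves
    exact ⟨F, G, l, r, hfill, hfree⟩

theorem tensorBotTopFree {R : Ctx} {X : Form} (h : (R.fill (.leaf X)).TensorLed)
    (hX : ∀ F G, X ≠ .tensor F G) : X.TensorBotTopFree := by
  obtain ⟨-, -, l, r, -, hfree⟩ := h.exists_leaves_fill hX
  exact hfree X (by simp)

theorem replace {R : Ctx} {X : Form} {Ξ : Struct} (h : (R.fill (.leaf X)).TensorLed)
    (hX : ∀ F G, X ≠ .tensor F G) (hne : Ξ.leaves ≠ [])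
    (hΞ : ∀ H ∈ Ξ.leaves, H.TensorBotTopFree) : (R.fill Ξ).TensorLed := by
  obtain ⟨F, G, l, r, hfill, hfree⟩ := h.exists_leaves_fill hX
  refine ⟨F, G, l ++ Ξ.leaves ++ r, by simp [hne], hfill Ξ, fun H hH => ?_⟩
  simp only [List.mem_append, List.mem_cons] at hH hfree
  rcases hH with (hl | hmid) | hr
  · exact hfree H (.inl hl)
  · exact hΞ H hmid
  · exact hfree H (.inr (.inr hr))

theorem replace_leaf {R : Ctx} {X Y : Form} (h : (R.fill (.leaf X)).TensorLed)
    (hX : ∀ F G, X ≠ .tensor F G) (hY : Y.TensorBotTopFree) : (R.fill (.leaf Y)).TensorLed :=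
  h.replace hX (by simp [leaves]) (by simpa [leaves] using hY)

theorem replace_pair {R : Ctx} {X Y Z : Form} (h : (R.fill (.leaf X)).TensorLed)
    (hX : ∀ F G, X ≠ .tensor F G) (hY : Y.TensorBotTopFree) (hZ : Z.TensorBotTopFree) :
    (R.fill (.pair (.leaf Y) (.leaf Z))).TensorLed :=
  h.replace hX (by simp [leaves]) (by simp [leaves, hY, hZ])

theorem congr_leaves {Γ Δ : Struct} (h : Γ.TensorLed) (hleaves : Γ.leaves = Δ.leaves) :
    Δ.TensorLed := by
  rwa [TensorLed, ← hleaves]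

end Struct.TensorLed

namespace CNLDer

theorem not_tensorLed {a : Bool} {Γ : Struct} (d : CNLDer false a Γ) : ¬ Γ.TensorLed := by
  generalize he : false = e at d
  induction d with
  | initP k | initN k | one => simp [Struct.TensorLed, Struct.leaves]
  | tensor => exact Struct.TensorLed.not_comma_tensor _ _ _
  | par R _ ih =>
    intro h
    obtain ⟨hF, hG⟩ := h.tensorBotTopFree (by simp)
    exact ih he (h.replace_pair (by simp) hF hG)
  | oplus₁ R _ ih =>
    intro h
    exact ih he (h.replace_leaf (by simp) (h.tensorBotTopFree (by simp)).1)
  | oplus₂ R _ ih =>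
    intro h
    exact ih he (h.replace_leaf (by simp) (h.tensorBotTopFree (by simp)).2)
  | with' R _ _ ih _ =>
    intro h
    exact ih he (h.replace_leaf (by simp) (h.tensorBotTopFree (by simp)).1)
  | bot R | top R => exact fun h => h.tensorBotTopFree (by simp)
  | exch => contradiction
  | assoc₁ _ ih | assoc₂ _ ih =>
    exact fun h => ih he (h.congr_leaves (by simp [Struct.leaves_comma]))

theorem par_tensor {e a : Bool} {F F' G G' : Form} (hF : CNLDer e a (.pair (.leaf F') (.leaf F)))
    (hG : CNLDer e a (.pair (.leaf G) (.leaf G'))) :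
    CNLDer e a (.pair (.leaf (.par F' G)) (.leaf (.tensor G' F))) :=
  .par (.pairL .hole (.leaf (.tensor G' F))) (.tensor (Γ := .leaf F') (Δ := .leaf G) hF hG)

end CNLDer

theorem exchange_needed_general {a b : Bool} {F F' G G' : Form}
    (hF : CNLDer true a (.pair (.leaf F') (.leaf F)))
    (hG : CNLDer true a (.pair (.leaf G) (.leaf G')))
    (hF'_free : F'.TensorBotTopFree) (hG_free : G.TensorBotTopFree) :
    CNLDer true a (.pair (.leaf (.tensor G' F)) (.leaf (.par F' G))) ∧
    ¬ CNLDer false b (.pair (.leaf (.tensor G' F)) (.leaf (.par F' G))) := by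
  refine ⟨.exch (Γ := .leaf _) (Δ := .leaf _) (hF.par_tensor hG), fun d => d.not_tensorLed ?_⟩
  exact ⟨G', F, [.par F' G], by simp, rfl, by simpa using ⟨hF'_free, hG_free⟩⟩

/-- The sequent `⊢ (B⊥⊗A, A⊥⅋B)` — the translation of the acLL sequent
`A→B ⊢ A→B`, where `A`, `B` are atoms — is provable in CNL, and every proof of
it uses the top-level exchange rule `E` (it is not provable when `E` is
removed). -/
theorem exchange_needed (n m : ℕ) :
    CNLDer true true
      (.pair (.leaf (.tensor (.neg m) (.pos n))) (.leaf (.par (.neg n) (.pos m)))) ∧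
    ¬ CNLDer false true
      (.pair (.leaf (.tensor (.neg m) (.pos n))) (.leaf (.par (.neg n) (.pos m)))) :=
  exchange_needed_general (.initN n) (.initP m) trivial trivial

end CNL
end
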